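/- arXiv:2507.16107 — 2 statements merged into one kernel-verified Lean document; each statement's English description precedes it below -/
import Mathlib

section
/- Let p and q be full laws and r a missingness pattern with p(X = x, O = o, R = r) > 0 and q(X = x, O = o, R = r) > 0 for all x, o. Suppose (i) for every o and every assignment x_{O(r)}, ∑_{x_{M(r)}} p(X = x, O = o, R = r) = ∑_{x_{M(r)}} q(X = x, O = o, R = r), and (ii) for every i ∈ M(r) and all values x, o, p(X_i = x_i | X_{-i} = x_{-i}, O = o, R = r) = q(X_i = x_i | X_{-i} = x_{-i}, O = o, R = r). Then p(X = x, O = o, R = r) = q(X = x, O = o, R = r) for all x, o. (The joint at a pattern is determined by its interpolation density, the margin p(O, R = r), and the Gibbs factors of its extrapolation density.) -/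
/-!
Equality of the Gibbs factors at coordinate `i` says that the ratio `p / q` does not change when
coordinate `i` is changed. Changing the missing coordinates one at a time connects any two states
with the same observed coordinates, and positivity keeps every state on the way in the support, so
`p / q` depends on the observed coordinates only. Since the sums of `p` and of `q` over the missing
coordinates agree, this ratio is `1`.
-/

section

open Function

variable {ι 𝕜 : Type*} {𝒳 : ι → Type*}

lemma dependsOn_compl_of_update_eq [DecidableEq ι] {β : Type*} {φ : (∀ i, 𝒳 i) → β}
    {s : Set ι} (hs : s.Finite) (hφ : ∀ i ∈ s, ∀ x y, φ (update x i y) = φ x) :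
    DependsOn φ sᶜ := by
  induction s, hs using Set.Finite.induction_on with
  | empty => simpa using dependsOn_univ φ
  | @insert a s _ _ ih =>
    intro x x' hxx'
    have h_agree : ∀ i ∈ sᶜ, update x a (x' a) i = x' i := by
      intro i hi
      obtain rfl | hia := eq_or_ne i a
      · exact update_self ..
      · rw [update_of_ne hia]
        exact hxx' i (by simp_all)
    calc φ x = φ (update x a (x' a)) := (hφ a (s.mem_insert a) x (x' a)).symm
      _ = φ x' := ih (fun i hi ↦ hφ i (s.mem_insert_of_mem a hi)) h_agree

lemma eq_of_div_eq_div_of_sum_eq [Field 𝕜] {α : Type*} {s : Finset α} {f g : α → 𝕜} {a : α}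
    (hg : ∀ b ∈ s, g b ≠ 0) (hg_sum : ∑ b ∈ s, g b ≠ 0)
    (h_ratio : ∀ b ∈ s, f b / g b = f a / g a) (h_sum : ∑ b ∈ s, f b = ∑ b ∈ s, g b) :
    f a = g a := by
  have hf_sum : ∑ b ∈ s, f b = f a / g a * ∑ b ∈ s, g b := by
    rw [Finset.mul_sum]
    refine Finset.sum_congr rfl fun b hb ↦ ?_
    rw [← h_ratio b hb, div_mul_cancel₀ _ (hg b hb)]
  have h_one : f a / g a = 1 := (mul_eq_right₀ hg_sum).mp (hf_sum.symm.trans h_sum)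
  exact eq_of_div_eq_one h_one

variable [DecidableEq ι] [∀ i, Fintype (𝒳 i)] [Field 𝕜]

/-- The Gibbs factor, or full conditional, of coordinate `i` at `x`: if `f` is proportional to the
mass function of `X`, this is the probability of `X i = x i` given the other coordinates of `x`. -/
def gibbsFactor (f : (∀ i, 𝒳 i) → 𝕜) (i : ι) (x : ∀ i, 𝒳 i) : 𝕜 :=
  f x / ∑ y, f (update x i y)

variable {f g : (∀ i, 𝒳 i) → 𝕜}

lemma div_eq_sum_update_div_sum_update {i : ι} {x : ∀ i, 𝒳 i} (hgx : g x ≠ 0)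
    (hg_sum : ∑ y, g (update x i y) ≠ 0) (h : gibbsFactor f i x = gibbsFactor g i x) :
    f x / g x = (∑ y, f (update x i y)) / ∑ y, g (update x i y) := by
  -- Division by zero is zero, whereas `gibbsFactor g i x` is nonzero.
  have hf_sum : ∑ y, f (update x i y) ≠ 0 := by
    intro h_zero
    rw [gibbsFactor, h_zero, div_zero] at h
    exact div_ne_zero hgx hg_sum h.symm
  exact (div_eq_div_iff_div_eq_div' hf_sum hgx).mp h

variable [LinearOrder 𝕜] [IsStrictOrderedRing 𝕜]

lemma div_update_eq_div_of_gibbsFactor_eq {i : ι} (hg : ∀ x, 0 < g x)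
    (h : gibbsFactor f i = gibbsFactor g i) (x : ∀ i, 𝒳 i) (y : 𝒳 i) :
    f (update x i y) / g (update x i y) = f x / g x := by
  have h_ratio (x : ∀ i, 𝒳 i) :
      f x / g x = (∑ y, f (update x i y)) / ∑ y, g (update x i y) :=
    div_eq_sum_update_div_sum_update (hg x).ne'
      (Finset.sum_pos (fun y _ ↦ hg _) ⟨x i, Finset.mem_univ _⟩).ne' (congrFun h x)
  rw [h_ratio (update x i y), h_ratio x]
  simp only [update_idem]

lemma dependsOn_div_of_gibbsFactor_eq {O : Set ι} (hO : Oᶜ.Finite) (hg : ∀ x, 0 < g x)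
    (h : ∀ i ∉ O, gibbsFactor f i = gibbsFactor g i) : DependsOn (fun x ↦ f x / g x) O := by
  rw [← compl_compl O]
  exact dependsOn_compl_of_update_eq hO fun i hi ↦ div_update_eq_div_of_gibbsFactor_eq hg (h i hi)

theorem pattern_joint_determined_by_gibbs_general [Fintype ι] [∀ i, DecidableEq (𝒳 i)]
    {O : Set ι} [DecidablePred (· ∈ O)] (hg : ∀ x, 0 < g x)
    (h_margin : ∀ x : ∀ i, 𝒳 i,
      ∑ x' with ∀ i ∈ O, x' i = x i, f x' = ∑ x' with ∀ i ∈ O, x' i = x i, g x')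
    (h_gibbs : ∀ i ∉ O, gibbsFactor f i = gibbsFactor g i) : f = g := by
  have h_ratio : DependsOn (fun x ↦ f x / g x) O :=
    dependsOn_div_of_gibbsFactor_eq Oᶜ.toFinite hg h_gibbs
  ext x
  have hg_margin : 0 < ∑ x' with ∀ i ∈ O, x' i = x i, g x' :=
    Finset.sum_pos (fun x' _ ↦ hg x') ⟨x, by simp⟩
  exact eq_of_div_eq_div_of_sum_eq (fun x' _ ↦ (hg x').ne') hg_margin.ne'
    (fun x' hx' ↦ h_ratio (Finset.mem_filter.mp hx').2) (h_margin x)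

end

/-- The joint distribution at a pattern `r` is determined by its
interpolation density (and margin over `O, R = r`) together with the Gibbs factors of
its extrapolation density, for full laws positive at `r`. -/
theorem pattern_joint_determined_by_gibbs
    (K : ℕ) (hK : 1 ≤ K)
    (𝒳 : Fin K → Type) [∀ i, Fintype (𝒳 i)] [∀ i, Nonempty (𝒳 i)]
    [∀ i, DecidableEq (𝒳 i)]
    (𝒪 : Type) [Fintype 𝒪] [Nonempty 𝒪]
    (p q : (∀ i, 𝒳 i) → 𝒪 → (Fin K → Bool) → ℝ)
    -- `p` and `q` are probability mass functions (full laws)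
    (hp_nonneg : ∀ x o r, 0 ≤ p x o r)
    (hp_sum : ∑ x : ∀ i, 𝒳 i, ∑ o : 𝒪, ∑ r : Fin K → Bool, p x o r = 1)
    (hq_nonneg : ∀ x o r, 0 ≤ q x o r)
    (hq_sum : ∑ x : ∀ i, 𝒳 i, ∑ o : 𝒪, ∑ r : Fin K → Bool, q x o r = 1)
    -- a missingness pattern at which both laws are positive
    (r : Fin K → Bool)
    (hp_pos : ∀ (x : ∀ i, 𝒳 i) (o : 𝒪), 0 < p x o r)
    (hq_pos : ∀ (x : ∀ i, 𝒳 i) (o : 𝒪), 0 < q x o r)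
    -- (i) the interpolation margins agree: for every `o` and assignment to `X_{O(r)}`
    (h_interp : ∀ (o : 𝒪) (x : ∀ i, 𝒳 i),
      (∑ x' : ∀ i, 𝒳 i, if ∀ i, r i = true → x' i = x i then p x' o r else 0)
        = ∑ x' : ∀ i, 𝒳 i, if ∀ i, r i = true → x' i = x i then q x' o r else 0)
    -- (ii) the Gibbs factors agree for every `i ∈ M(r)`
    (h_gibbs : ∀ i : Fin K, r i = false → ∀ (x : ∀ j, 𝒳 j) (o : 𝒪),
      p x o r / (∑ y : 𝒳 i, p (Function.update x i y) o r)
        = q x o r / (∑ y : 𝒳 i, q (Function.update x i y) o r)) :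
    ∀ (x : ∀ i, 𝒳 i) (o : 𝒪), p x o r = q x o r := by
  intro x o
  have h_missing : ∀ i ∉ {i | r i = true},
      gibbsFactor (fun x ↦ p x o r) i = gibbsFactor (fun x ↦ q x o r) i :=
    fun i hi ↦ funext fun x ↦ h_gibbs i (by simpa using hi) x o
  refine congrFun (pattern_joint_determined_by_gibbs_general
    (fun x ↦ hq_pos x o) (fun x ↦ ?_) h_missing) x
  simpa [Finset.sum_filter] using h_interp o x
end

section
/- Let K = 3, let 𝒳_1, 𝒳_2, 𝒳_3 be nonempty finite sets, and let p be a strictly positive probability mass function on 𝒳_1 × 𝒳_2 × 𝒳_3 × {0,1}^3. Suppose the conditional independences X_1 ⊥ R_1 | X_2, X_3, R_2, R_3 and X_2 ⊥ R_2 | X_1, X_3, R_1, R_3 hold under p. Define OR(r_1, r_2 | R_3 = 1, x) = [p(R_1 = r_1 | R_2 = r_2, R_3 = 1, X = x)/p(R_1 = 1 | R_2 = r_2, R_3 = 1, X = x)] · [p(R_1 = 1 | R_2 = 1, R_3 = 1, X = x)/p(R_1 = r_1 | R_2 = 1, R_3 = 1, X = x)]. Then OR(r_1, r_2 | R_3 =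 1, x) does not depend on the first two coordinates of x: for all r_1, r_2 and all x_1, x_1' ∈ 𝒳_1, x_2, x_2' ∈ 𝒳_2, x_3 ∈ 𝒳_3, OR(r_1, r_2 | R_3 = 1, (x_1, x_2, x_3)) = OR(r_1, r_2 | R_3 = 1, (x_1', x_2', x_3)). -/
/-- `OR(r_1, r_2 | R_3 = 1, x) = [p(R_1 = r_1 | R_2 = r_2, R_3 = 1, X = x)/
p(R_1 = 1 | R_2 = r_2, R_3 = 1, X = x)] · [p(R_1 = 1 | R_2 = 1, R_3 = 1, X = x)/
p(R_1 = r_1 | R_2 = 1, R_3 = 1, X = x)]`. -/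
noncomputable def OR12given3 {𝒳₁ 𝒳₂ 𝒳₃ : Type}
    (p : 𝒳₁ → 𝒳₂ → 𝒳₃ → Bool → Bool → Bool → ℝ)
    (x1 : 𝒳₁) (x2 : 𝒳₂) (x3 : 𝒳₃) (r1 r2 : Bool) : ℝ :=
  ((p x1 x2 x3 r1 r2 true / ∑ b : Bool, p x1 x2 x3 b r2 true)
      / (p x1 x2 x3 true r2 true / ∑ b : Bool, p x1 x2 x3 b r2 true))
    * ((p x1 x2 x3 true true true / ∑ b : Bool, p x1 x2 x3 b true true)
      / (p x1 x2 x3 r1 true true / ∑ b : Bool, p x1 x2 x3 b true true))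

/-!
Independence of `X_1` and `R_1` given the remaining variables makes the odds of `R_1` free of `x_1`,
and the odds ratio is a quotient of two such odds, so it is free of `x_1`. The odds ratio is also
symmetric in the roles of `R_1` and `R_2`, so the same argument with the indices exchanged removes
`x_2`. The variables `X_3` and `R_3` only enter as a fixed context.
-/

section OddsRatio

variable {α β ι κ : Type*}

/-- Independence of the two coordinates under the distribution proportional to the weight `w`, in
the convention that nothing is required when the total weight is not positive. Conditional
independence is expressed by taking for `w` the slices of a joint weight. -/
def IndepCoords [Fintype α] [Fintype ι] (w : α → ι → ℝ) : Prop :=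
  ∀ a i, 0 < ∑ a', ∑ i', w a' i' →
    w a i / ∑ a', ∑ i', w a' i' =
      (∑ i', w a i') / (∑ a', ∑ i', w a' i') * ((∑ a', w a' i) / ∑ a', ∑ i', w a' i')

lemma IndepCoords.div_eq_sum_div_sum [Fintype α] [Fintype ι] {w : α → ι → ℝ}
    (h : IndepCoords w) (hpos : ∀ a i, 0 < w a i) (a : α) (i j : ι) :
    w a i / w a j = (∑ a', w a' i) / ∑ a', w a' j := by
  have hrow (a' : α) : 0 < ∑ i', w a' i' :=
    Finset.sum_pos (fun i' _ => hpos a' i') ⟨i, Finset.mem_univ i⟩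
  have htotal : 0 < ∑ a', ∑ i', w a' i' :=
    Finset.sum_pos (fun a' _ => hrow a') ⟨a, Finset.mem_univ a⟩
  rw [← div_div_div_cancel_right₀ htotal.ne', h a i htotal, h a j htotal,
    mul_div_mul_left _ _ (div_pos (hrow a) htotal).ne', div_div_div_cancel_right₀ htotal.ne']

/-- The odds ratio of the two-way table `m` at `(i, k)`, relative to the reference levels
`(i₀, k₀)`. Entries of `m` may be joint weights, since normalizing each column cancels. -/
noncomputable def oddsRatio (m : ι → κ → ℝ) (i₀ : ι) (k₀ : κ) (i : ι) (k : κ) : ℝ :=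
  m i k / m i₀ k * (m i₀ k₀ / m i k₀)

lemma oddsRatio_swap (m : ι → κ → ℝ) (i₀ : ι) (k₀ : κ) (i : ι) (k : κ) :
    oddsRatio (fun k i => m i k) k₀ i₀ k i = oddsRatio m i₀ k₀ i k := by
  simp only [oddsRatio]
  ring

lemma oddsRatio_eq_of_indepCoords [Fintype α] [Fintype ι] {w : α → ι → κ → ℝ}
    (hpos : ∀ a i k, 0 < w a i k) (h : ∀ k, IndepCoords fun a i => w a i k)
    (a a' : α) (i₀ : ι) (k₀ : κ) (i : ι) (k : κ) :
    oddsRatio (w a) i₀ k₀ i k = oddsRatio (w a') i₀ k₀ i k := by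
  have odds_eq (i j : ι) (k : κ) : w a i k / w a j k = w a' i k / w a' j k :=
    ((h k).div_eq_sum_div_sum (hpos · · k) a i j).trans
      ((h k).div_eq_sum_div_sum (hpos · · k) a' i j).symm
  rw [oddsRatio, oddsRatio, odds_eq i i₀ k, odds_eq i₀ i k₀]

theorem odds_ratio_not_function_of_x1_x2_general [Fintype α] [Fintype β] [Fintype ι] [Fintype κ]
    {w : α → β → ι → κ → ℝ} (hpos : ∀ a b i k, 0 < w a b i k)
    (h₁ : ∀ b k, IndepCoords fun a i => w a b i k)
    (h₂ : ∀ a i, IndepCoords fun b k => w a b i k)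
    (a a' : α) (b b' : β) (i₀ : ι) (k₀ : κ) (i : ι) (k : κ) :
    oddsRatio (w a b) i₀ k₀ i k = oddsRatio (w a' b') i₀ k₀ i k :=
  calc oddsRatio (w a b) i₀ k₀ i k
    _ = oddsRatio (w a' b) i₀ k₀ i k :=
        oddsRatio_eq_of_indepCoords (hpos · b) (h₁ b) a a' i₀ k₀ i k
    _ = oddsRatio (fun k i => w a' b i k) k₀ i₀ k i := (oddsRatio_swap _ i₀ k₀ i k).symm
    _ = oddsRatio (fun k i => w a' b' i k) k₀ i₀ k i :=
        oddsRatio_eq_of_indepCoords (w := fun b k i => w a' b i k)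
          (fun b k i => hpos a' b i k) (h₂ a') b b' k₀ i₀ k i
    _ = oddsRatio (w a' b') i₀ k₀ i k := oddsRatio_swap _ i₀ k₀ i k

end OddsRatio

lemma OR12given3_eq_oddsRatio {𝒳₁ 𝒳₂ 𝒳₃ : Type} {p : 𝒳₁ → 𝒳₂ → 𝒳₃ → Bool → Bool → Bool → ℝ}
    {x1 : 𝒳₁} {x2 : 𝒳₂} {x3 : 𝒳₃} (hpos : ∀ r1 r2, 0 < p x1 x2 x3 r1 r2 true) (r1 r2 : Bool) :
    OR12given3 p x1 x2 x3 r1 r2 =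
      oddsRatio (fun r1 r2 => p x1 x2 x3 r1 r2 true) true true r1 r2 := by
  have hcol (r : Bool) : ∑ b : Bool, p x1 x2 x3 b r true ≠ 0 :=
    (Finset.sum_pos (fun b _ => hpos b r) Finset.univ_nonempty).ne'
  rw [OR12given3, oddsRatio, div_div_div_cancel_right₀ (hcol r2),
    div_div_div_cancel_right₀ (hcol true)]

/-- Under strict positivity and the conditional independences
`X_1 ⊥ R_1 | X_2, X_3, R_2, R_3` and `X_2 ⊥ R_2 | X_1, X_3, R_1, R_3`, the odds ratio
`OR(r_1, r_2 | R_3 = 1, x)` does not depend on the first two coordinates of `x`. -/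
theorem odds_ratio_not_function_of_x1_x2
    (𝒳₁ 𝒳₂ 𝒳₃ : Type) [Fintype 𝒳₁] [Fintype 𝒳₂] [Fintype 𝒳₃]
    [Nonempty 𝒳₁] [Nonempty 𝒳₂] [Nonempty 𝒳₃]
    (p : 𝒳₁ → 𝒳₂ → 𝒳₃ → Bool → Bool → Bool → ℝ)
    -- `p` is a strictly positive probability mass function
    (hpos : ∀ x1 x2 x3 r1 r2 r3, 0 < p x1 x2 x3 r1 r2 r3)
    (hsum : ∑ x1 : 𝒳₁, ∑ x2 : 𝒳₂, ∑ x3 : 𝒳₃, ∑ r1 : Bool, ∑ r2 : Bool, ∑ r3 : Bool,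
      p x1 x2 x3 r1 r2 r3 = 1)
    -- `X_1 ⊥ R_1 | X_2, X_3, R_2, R_3`
    (hCI1 : ∀ (x1 : 𝒳₁) (x2 : 𝒳₂) (x3 : 𝒳₃) (r1 r2 r3 : Bool),
      0 < (∑ y : 𝒳₁, ∑ b : Bool, p y x2 x3 b r2 r3) →
      p x1 x2 x3 r1 r2 r3 / (∑ y : 𝒳₁, ∑ b : Bool, p y x2 x3 b r2 r3)
        = ((∑ b : Bool, p x1 x2 x3 b r2 r3)
            / (∑ y : 𝒳₁, ∑ b : Bool, p y x2 x3 b r2 r3))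
          * ((∑ y : 𝒳₁, p y x2 x3 r1 r2 r3)
            / (∑ y : 𝒳₁, ∑ b : Bool, p y x2 x3 b r2 r3)))
    -- `X_2 ⊥ R_2 | X_1, X_3, R_1, R_3`
    (hCI2 : ∀ (x1 : 𝒳₁) (x2 : 𝒳₂) (x3 : 𝒳₃) (r1 r2 r3 : Bool),
      0 < (∑ y : 𝒳₂, ∑ b : Bool, p x1 y x3 r1 b r3) →
      p x1 x2 x3 r1 r2 r3 / (∑ y : 𝒳₂, ∑ b : Bool, p x1 y x3 r1 b r3)
        = ((∑ b : Bool, p x1 x2 x3 r1 b r3)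
            / (∑ y : 𝒳₂, ∑ b : Bool, p x1 y x3 r1 b r3))
          * ((∑ y : 𝒳₂, p x1 y x3 r1 r2 r3)
            / (∑ y : 𝒳₂, ∑ b : Bool, p x1 y x3 r1 b r3))) :
    ∀ (r1 r2 : Bool) (x1 x1' : 𝒳₁) (x2 x2' : 𝒳₂) (x3 : 𝒳₃),
      OR12given3 p x1 x2 x3 r1 r2 = OR12given3 p x1' x2' x3 r1 r2 := by
  intro r1 r2 x1 x1' x2 x2' x3
  rw [OR12given3_eq_oddsRatio (hpos x1 x2 x3 · · true),
    OR12given3_eq_oddsRatio (hpos x1' x2' x3 · · true)]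
  exact odds_ratio_not_function_of_x1_x2_general (w := fun x1 x2 r1 r2 => p x1 x2 x3 r1 r2 true)
    (hpos · · x3 · · true) (fun x2 r2 x1 r1 => hCI1 x1 x2 x3 r1 r2 true)
    (fun x1 r1 x2 r2 => hCI2 x1 x2 x3 r1 r2 true) x1 x1' x2 x2' true true r1 r2
end
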